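/- arXiv:2402.06279 — 2 statements merged into one kernel-verified Lean document; each statement's English description precedes it below -/
import Mathlib

section
/- Let A be a bounded self-adjoint operator on H and B a bounded self-adjoint operator on K. Then the spectrum of A ⊗ id + id ⊗ B + A ⊗ B equals {x + y + xy : x ∈ σ(A), y ∈ σ(B)}. -/
open scoped InnerProductSpace

/-!
Since `C + 1 = (A + 1) ⊗ (B + 1)`, everything reduces to the theorem of Brown and Pearcy that
`σ(S ⊗ T) = σ(S) σ(T)` for arbitrary bounded operators `S` and `T`.

For `⊆`, the commuting factors of `S ⊗ T = (S ⊗ 1) (1 ⊗ T)` lie in a commutative Banach algebra in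
which their spectra do not grow, namely their bicommutant, and characters are multiplicative.

For `⊇`, let `a ∈ σ(S)` and `b ∈ σ(T)`. An approximate eigenvector of `S` tensored with one of `T`
is one of `S ⊗ T`, and the same holds for the adjoints; a point of `σ(S)` is an approximate
eigenvalue of `S` or its conjugate one of `S†`, but `a` and `b` may be of opposite kinds. Points of
the boundary of the spectrum are of both kinds, and moving `(a, b)` along the curve of constant
product inside `σ(S) × σ(T)` until one coordinate reaches the boundary removes the obstruction.
-/

open scoped TensorProduct Pointwise Topology ComplexConjugate
open ContinuousLinearMap (adjoint)

section CompactSets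

variable {𝕜 : Type*} [NormedField 𝕜] [NormedAlgebra ℝ 𝕜] {s t : Set 𝕜}

lemma nonempty_frontier_of_isCompact (hs : IsCompact s) (hne : s.Nonempty) :
    (frontier s).Nonempty := by
  have : NoncompactSpace 𝕜 := NormedSpace.noncompactSpace ℝ 𝕜
  have : PathConnectedSpace 𝕜 := IsTopologicalAddGroup.pathConnectedSpace
  exact nonempty_frontier_iff.mpr ⟨hne, hs.ne_univ⟩

lemma exists_one_lt_smul_mem_of_mem_interior {a b : 𝕜} (ha : a ∈ interior s)
    (hb : b ∈ interior t) : ∃ r : ℝ, 1 < r ∧ r • a ∈ s ∧ r⁻¹ • b ∈ t := by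
  have hra : Filter.Tendsto (fun r : ℝ ↦ r • a) (𝓝 1) (𝓝 a) :=
    Continuous.tendsto' (by fun_prop) 1 a (one_smul ℝ a)
  have hrb : Filter.Tendsto (fun r : ℝ ↦ r⁻¹ • b) (𝓝 1) (𝓝 b) := by
    simpa using (tendsto_inv₀ (one_ne_zero (α := ℝ))).smul_const b
  have near_one : ∀ᶠ r : ℝ in 𝓝[>] 1, r • a ∈ s ∧ r⁻¹ • b ∈ t :=
    nhdsWithin_le_nhds <| (hra.eventually_mem (mem_interior_iff_mem_nhds.mp ha)).and
      (hrb.eventually_mem (mem_interior_iff_mem_nhds.mp hb))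
  exact (eventually_mem_nhdsWithin.and near_one).exists

lemma exists_mem_frontier_mul_eq (hs : IsCompact s) (ht : IsCompact t) {a b : 𝕜} (ha : a ∈ s)
    (hb : b ∈ t) :
    ∃ a' ∈ s, ∃ b' ∈ t, a' * b' = a * b ∧ (a' ∈ frontier s ∨ b' ∈ frontier t) := by
  rcases eq_or_ne a 0 with rfl | ha₀
  · obtain ⟨b', hb'⟩ := nonempty_frontier_of_isCompact ht ⟨b, hb⟩
    exact ⟨0, ha, b', ht.isClosed.frontier_subset hb', by simp, .inr hb'⟩
  rcases eq_or_ne b 0 with rfl | hb₀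
  · obtain ⟨a', ha'⟩ := nonempty_frontier_of_isCompact hs ⟨a, ha⟩
    exact ⟨a', hs.isClosed.frontier_subset ha', 0, hb, by simp, .inl ha'⟩
  have hcompact : IsCompact (s ×ˢ t ∩ {p | p.1 * p.2 = a * b}) :=
    (hs.prod ht).inter_right (isClosed_eq (by fun_prop) continuous_const)
  obtain ⟨⟨a', b'⟩, ⟨⟨ha', hb'⟩, hab'⟩, hmax⟩ :=
    hcompact.exists_isMaxOn ⟨(a, b), ⟨ha, hb⟩, rfl⟩ (f := fun p ↦ ‖p.1‖) (by fun_prop)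
  refine ⟨a', ha', b', hb', hab', ?_⟩
  by_contra! hfrontier
  obtain ⟨r, hr, hra, hrb⟩ := exists_one_lt_smul_mem_of_mem_interior
    (by_contra fun h ↦ hfrontier.1 ⟨subset_closure ha', h⟩)
    (by_contra fun h ↦ hfrontier.2 ⟨subset_closure hb', h⟩)
  have hr₀ : r ≠ 0 := by positivity
  have hab'_scaled : (r • a') * (r⁻¹ • b') = a * b := by
    rw [smul_mul_smul_comm, mul_inv_cancel₀ hr₀, one_smul, hab']
  have hle : ‖r • a'‖ ≤ ‖a'‖ := hmax (a := (r • a', r⁻¹ • b')) ⟨⟨hra, hrb⟩, hab'_scaled⟩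
  have ha'_pos : 0 < ‖a'‖ :=
    norm_pos_iff.mpr (left_ne_zero_of_mul (hab'.trans_ne (mul_ne_zero ha₀ hb₀)))
  rw [norm_smul, Real.norm_of_nonneg (by positivity)] at hle
  nlinarith

end CompactSets

section CommutingElements

lemma mem_spectrum_centralizer_iff {R A : Type*} [CommRing R] [Ring A] [Algebra R A] {s : Set A}
    {x : Subalgebra.centralizer R s} {r : R} : r ∈ spectrum R x ↔ r ∈ spectrum R (x : A) := by
  refine ⟨fun hr hunit ↦ hr ?_, fun hr ↦ AlgHom.spectrum_apply_subset (Subalgebra.val _) x hr⟩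
  obtain ⟨u, hu⟩ := hunit
  have hu_mem : (u : A) ∈ Subalgebra.centralizer R s := by
    rw [hu]
    exact sub_mem (Subalgebra.algebraMap_mem _ r) x.2
  have hinv_mem : (↑u⁻¹ : A) ∈ Subalgebra.centralizer R s := fun g hg ↦
    (show Commute g u from hu_mem g hg).units_inv_right
  exact ⟨⟨⟨u, hu_mem⟩, ⟨_, hinv_mem⟩, Subtype.ext (by simp), Subtype.ext (by simp)⟩,
    Subtype.ext hu⟩

lemma spectrum_mul_subset_of_commRing {A : Type*} [NormedCommRing A] [NormedAlgebra ℂ A]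
    [CompleteSpace A] (a b : A) : spectrum ℂ (a * b) ⊆ spectrum ℂ a * spectrum ℂ b := by
  intro z hz
  obtain ⟨φ, rfl⟩ := WeakDual.CharacterSpace.mem_spectrum_iff_exists.mp hz
  exact ⟨φ a, AlgHom.apply_mem_spectrum φ a, φ b, AlgHom.apply_mem_spectrum φ b,
    (map_mul φ a b).symm⟩

lemma spectrum_mul_subset_of_commute {A : Type*} [NormedRing A] [NormedAlgebra ℂ A]
    [CompleteSpace A] {a b : A} (hab : Commute a b) :
    spectrum ℂ (a * b) ⊆ spectrum ℂ a * spectrum ℂ b := by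
  let M : Subalgebra ℂ A := Subalgebra.centralizer ℂ (Set.centralizer {a, b})
  have hcomm : ∀ x ∈ M, ∀ y ∈ M, x * y = y * x := by
    apply Set.centralizer_centralizer_comm_of_comm
    rintro x (rfl | rfl) y (rfl | rfl) <;> simp [hab.eq]
  have : CompleteSpace M := (Set.isClosed_centralizer _ : IsClosed (M : Set A)).completeSpace_coe
  let : NormedCommRing M :=
    { (inferInstance : NormedRing M) with
      mul_comm := fun x y ↦ Subtype.ext (hcomm x x.2 y y.2) }
  let a' : M := ⟨a, Set.subset_centralizer_centralizer (by simp)⟩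
  let b' : M := ⟨b, Set.subset_centralizer_centralizer (by simp)⟩
  intro z hz
  have hz' : z ∈ spectrum ℂ (a' * b') := mem_spectrum_centralizer_iff.mpr hz
  obtain ⟨x, hx, y, hy, rfl⟩ := spectrum_mul_subset_of_commRing a' b' hz'
  exact ⟨x, mem_spectrum_centralizer_iff.mp hx, y, mem_spectrum_centralizer_iff.mp hy, rfl⟩

end CommutingElements

section ApproximatePointSpectrum

/-- The approximate point spectrum of a bounded operator: the scalars `μ` that have unit vectors
`v` with `T v - μ v` arbitrarily small. -/
def approximatePointSpectrum {𝕜 E : Type*} [NontriviallyNormedField 𝕜] [NormedAddCommGroup E]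
    [NormedSpace 𝕜 E] (T : E →L[𝕜] E) : Set 𝕜 :=
  {μ | ∀ ε > 0, ∃ v, ‖v‖ = 1 ∧ ‖T v - μ • v‖ < ε}

variable {𝕜 E : Type*} [RCLike 𝕜] [NormedAddCommGroup E]

section BanachSpace

variable [NormedSpace 𝕜 E] {T : E →L[𝕜] E} {μ : 𝕜}

lemma notMem_approximatePointSpectrum_iff :
    μ ∉ approximatePointSpectrum T ↔ ∃ c > 0, ∀ v, c * ‖v‖ ≤ ‖(algebraMap 𝕜 _ μ - T) v‖ := by
  have apply_eq (v : E) : ‖(algebraMap 𝕜 (E →L[𝕜] E) μ - T) v‖ = ‖T v - μ • v‖ := by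
    simp [Algebra.algebraMap_eq_smul_one, norm_sub_rev]
  simp only [approximatePointSpectrum, Set.mem_ofPred_eq, apply_eq]
  push Not
  refine exists_congr fun c ↦ and_congr_right fun _ ↦ ⟨fun h v ↦ ?_, fun h v hv ↦ ?_⟩
  · rcases eq_or_ne v 0 with rfl | hv
    · simp
    have hunit := h ((‖v‖⁻¹ : 𝕜) • v) (norm_smul_inv_norm hv)
    rw [map_smul, smul_comm μ, ← smul_sub, norm_smul, norm_inv, RCLike.norm_coe_norm,
      inv_mul_eq_div, le_div_iff₀ (norm_pos_iff.mpr hv)] at hunit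
    exact hunit
  · simpa [hv] using h v

lemma approximatePointSpectrum_subset_spectrum : approximatePointSpectrum T ⊆ spectrum 𝕜 T := by
  intro μ hμ ⟨u, hu⟩
  refine notMem_approximatePointSpectrum_iff.mpr ?_ hμ
  rw [← hu, ← antilipschitzWith_iff_exists_mul_le_norm]
  exact ⟨_, (ContinuousLinearEquiv.unitsEquiv 𝕜 E u).antilipschitz⟩

lemma isUnit_of_norm_sub_lt_half [CompleteSpace E] {c : ℝ} (hc : 0 < c)
    (hT : ∀ v, c * ‖v‖ ≤ ‖T v‖) (u : (E →L[𝕜] E)ˣ) (hTu : ‖T - u‖ < c / 2) : IsUnit T := by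
  nontriviality E →L[𝕜] E
  have hinv : ‖(↑u⁻¹ : E →L[𝕜] E)‖ ≤ (c / 2)⁻¹ := by
    refine ContinuousLinearMap.opNorm_le_bound _ (by positivity) fun w ↦ ?_
    set v := (↑u⁻¹ : E →L[𝕜] E) w
    have huv : (u : E →L[𝕜] E) v = w := DFunLike.congr_fun u.mul_inv w
    have hsub : ‖T v - w‖ ≤ c / 2 * ‖v‖ :=
      huv ▸ (T - u).le_of_opNorm_le hTu.le v
    rw [inv_mul_eq_div, le_div_iff₀ (by positivity)]
    linarith [hT v, norm_le_norm_add_norm_sub' (T v) w]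
  have hlt : ‖T - u‖ < ‖(↑u⁻¹ : E →L[𝕜] E)‖⁻¹ :=
    hTu.trans_le ((le_inv_comm₀ (by positivity) (Units.norm_pos _)).mpr hinv)
  exact (u.ofNearby T hlt).isUnit

lemma frontier_spectrum_subset_approximatePointSpectrum [CompleteSpace E] :
    frontier (spectrum 𝕜 T) ⊆ approximatePointSpectrum T := by
  intro μ hμ
  by_contra hnot
  obtain ⟨c, hc, hbelow⟩ := notMem_approximatePointSpectrum_iff.mp hnot
  rw [frontier_eq_closure_inter_closure] at hμ
  obtain ⟨ν, hν, hμν⟩ := Metric.mem_closure_iff.mp hμ.2 (c / 2) (by positivity)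
  obtain ⟨u, hu⟩ := spectrum.notMem_iff.mp hν
  refine (spectrum.isClosed T).closure_subset hμ.1 (isUnit_of_norm_sub_lt_half hc hbelow u ?_)
  calc ‖algebraMap 𝕜 (E →L[𝕜] E) μ - T - u‖
    _ = ‖(μ - ν) • ContinuousLinearMap.id 𝕜 E‖ := by
      rw [hu, sub_sub_sub_cancel_right, ← map_sub, Algebra.algebraMap_eq_smul_one]; rfl
    _ ≤ ‖μ - ν‖ := by
      rw [norm_smul]
      exact mul_le_of_le_one_right (norm_nonneg _) ContinuousLinearMap.norm_id_le
    _ < c / 2 := by rwa [← dist_eq_norm]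

end BanachSpace

section HilbertSpace

variable [InnerProductSpace 𝕜 E] [CompleteSpace E] {T : E →L[𝕜] E} {μ : 𝕜}

lemma conj_mem_spectrum_adjoint_iff : conj μ ∈ spectrum 𝕜 (adjoint T) ↔ μ ∈ spectrum 𝕜 T := by
  rw [← ContinuousLinearMap.star_eq_adjoint, spectrum.map_star]
  simp

lemma mem_approximatePointSpectrum_or_conj_mem (hμ : μ ∈ spectrum 𝕜 T) :
    μ ∈ approximatePointSpectrum T ∨ conj μ ∈ approximatePointSpectrum (adjoint T) := by
  by_contra! hnot
  obtain ⟨hT, hTadj⟩ := hnot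
  obtain ⟨c, hc, hbelow⟩ := notMem_approximatePointSpectrum_iff.mp hTadj
  refine hμ ?_
  rw [spectrum.mem_resolventSet_iff, ContinuousLinearMap.isUnit_iff_bijective,
    ContinuousLinearMap.bijective_iff_dense_range_and_antilipschitz,
    antilipschitzWith_iff_exists_mul_le_norm]
  refine ⟨?_, notMem_approximatePointSpectrum_iff.mp hT⟩
  have hadj : adjoint (algebraMap 𝕜 (E →L[𝕜] E) μ - T) = algebraMap 𝕜 _ (conj μ) - adjoint T := by
    simp only [← ContinuousLinearMap.star_eq_adjoint, star_sub, starRingEnd_apply,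
      algebraMap_star_comm]
  rw [Submodule.topologicalClosure_eq_top_iff, ContinuousLinearMap.orthogonal_range, hadj,
    Submodule.eq_bot_iff]
  intro v hv
  have hle := hbelow v
  rw [show (algebraMap 𝕜 (E →L[𝕜] E) (conj μ) - adjoint T) v = 0 from hv, norm_zero] at hle
  exact norm_le_zero_iff.mp (nonpos_of_mul_nonpos_right hle hc)

lemma conj_mem_approximatePointSpectrum_adjoint_of_mem_frontier
    (hμ : μ ∈ frontier (spectrum 𝕜 T)) : conj μ ∈ approximatePointSpectrum (adjoint T) := by
  apply frontier_spectrum_subset_approximatePointSpectrum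
  have hpreimage : conj ⁻¹' spectrum 𝕜 (adjoint T) = spectrum 𝕜 T :=
    Set.ext fun _ ↦ conj_mem_spectrum_adjoint_iff
  rw [← hpreimage] at hμ
  exact ((RCLike.conjLIE (K := 𝕜)).toHomeomorph.preimage_frontier _).ge hμ

end HilbertSpace

end ApproximatePointSpectrum

/-- `tmul` exhibits `HK` as a Hilbert tensor product of `H` and `K`: inner products of elementary
tensors factor, and elementary tensors span a dense subspace. This determines `HK` only up to
isomorphism, so that no particular completion of `H ⊗[𝕜] K` has to be chosen. -/
structure IsHilbertTensorProduct {𝕜 H K HK : Type*} [RCLike 𝕜]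
    [NormedAddCommGroup H] [InnerProductSpace 𝕜 H] [NormedAddCommGroup K] [InnerProductSpace 𝕜 K]
    [NormedAddCommGroup HK] [InnerProductSpace 𝕜 HK] (tmul : H →ₗ[𝕜] K →ₗ[𝕜] HK) : Prop where
  inner_tmul : ∀ (h h' : H) (k k' : K),
    ⟪tmul h k, tmul h' k'⟫_𝕜 = ⟪h, h'⟫_𝕜 * ⟪k, k'⟫_𝕜
  dense_span : Dense (Submodule.span 𝕜 {z : HK | ∃ h k, z = tmul h k} : Set HK)

namespace IsHilbertTensorProduct

variable {𝕜 H K HK : Type*} [RCLike 𝕜]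
  [NormedAddCommGroup H] [InnerProductSpace 𝕜 H] [NormedAddCommGroup K] [InnerProductSpace 𝕜 K]
  [NormedAddCommGroup HK] [InnerProductSpace 𝕜 HK] {tmul : H →ₗ[𝕜] K →ₗ[𝕜] HK}

lemma flip (hHK : IsHilbertTensorProduct tmul) : IsHilbertTensorProduct tmul.flip where
  inner_tmul k k' h h' := by simp [hHK.inner_tmul, mul_comm]
  dense_span := by
    have hset : {z | ∃ k h, z = tmul.flip k h} = {z | ∃ h k, z = tmul h k} :=
      Set.ext fun _ ↦ exists_comm
    exact hset ▸ hHK.dense_span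

lemma norm_tmul (hHK : IsHilbertTensorProduct tmul) (h : H) (k : K) :
    ‖tmul h k‖ = ‖h‖ * ‖k‖ := by
  rw [← sq_eq_sq₀ (by positivity) (by positivity), mul_pow]
  exact_mod_cast (by simpa only [inner_self_eq_norm_sq_to_K] using hHK.inner_tmul h h k k :
    (‖tmul h k‖ : 𝕜) ^ 2 = (‖h‖ : 𝕜) ^ 2 * (‖k‖ : 𝕜) ^ 2)

lemma clm_ext {F : Type*} [NormedAddCommGroup F] [NormedSpace 𝕜 F]
    (hHK : IsHilbertTensorProduct tmul) {S T : HK →L[𝕜] F}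
    (hST : ∀ h k, S (tmul h k) = T (tmul h k)) : S = T := by
  refine ContinuousLinearMap.ext_on hHK.dense_span ?_
  rintro _ ⟨h, k, rfl⟩
  exact hST h k

lemma ext_inner (hHK : IsHilbertTensorProduct tmul) {x y : HK}
    (hxy : ∀ h k, ⟪x, tmul h k⟫_𝕜 = ⟪y, tmul h k⟫_𝕜) : x = y :=
  ext_inner_right 𝕜 (DFunLike.congr_fun (hHK.clm_ext (S := innerSL 𝕜 x) (T := innerSL 𝕜 y) hxy))

/-- The canonical isometric embedding of the algebraic tensor product. -/
noncomputable def lift (hHK : IsHilbertTensorProduct tmul) : H ⊗[𝕜] K →ₗᵢ[𝕜] HK :=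
  (TensorProduct.lift tmul).isometryOfInner fun x y ↦ by
    induction x using TensorProduct.induction_on with
    | zero => simp
    | add x₁ x₂ h₁ h₂ => simp only [map_add, inner_add_left, h₁, h₂]
    | tmul h k =>
      induction y using TensorProduct.induction_on with
      | zero => simp
      | add y₁ y₂ h₁ h₂ => simp only [map_add, inner_add_right, h₁, h₂]
      | tmul h' k' => simp [hHK.inner_tmul]

@[simp]
lemma lift_tmul (hHK : IsHilbertTensorProduct tmul) (h : H) (k : K) :
    hHK.lift (h ⊗ₜ k) = tmul h k :=
  TensorProduct.lift.tmul h k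

lemma denseRange_lift (hHK : IsHilbertTensorProduct tmul) : DenseRange hHK.lift := by
  have hspan : Submodule.span 𝕜 {z : HK | ∃ h k, z = tmul h k} ≤ hHK.lift.toLinearMap.range := by
    rw [Submodule.span_le]
    rintro _ ⟨h, k, rfl⟩
    exact ⟨h ⊗ₜ k, hHK.lift_tmul h k⟩
  exact hHK.dense_span.mono hspan

section Map

variable [CompleteSpace HK] (hHK : IsHilbertTensorProduct tmul)

/-- The tensor product `S ⊗ T` of two bounded operators, acting on the Hilbert tensor product. -/
noncomputable def map (S : H →L[𝕜] H) (T : K →L[𝕜] K) : HK →L[𝕜] HK :=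
  (hHK.lift.toLinearMap ∘ₗ (TensorProduct.mapL S T).toLinearMap).extendOfNorm hHK.lift.toLinearMap

@[simp]
lemma map_tmul (S : H →L[𝕜] H) (T : K →L[𝕜] K) (h : H) (k : K) :
    hHK.map S T (tmul h k) = tmul (S h) (T k) := by
  have hbound : ∃ C, ∀ x, ‖hHK.lift (TensorProduct.mapL S T x)‖ ≤ C * ‖hHK.lift x‖ :=
    ⟨‖TensorProduct.mapL S T‖, fun x ↦ by
      simpa only [LinearIsometry.norm_map] using (TensorProduct.mapL S T).le_opNorm x⟩
  rw [← lift_tmul hHK, ← lift_tmul hHK]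
  exact LinearMap.extendOfNorm_eq hHK.denseRange_lift hbound (h ⊗ₜ k)

lemma eq_map {C : HK →L[𝕜] HK} {S : H →L[𝕜] H} {T : K →L[𝕜] K}
    (hC : ∀ h k, C (tmul h k) = tmul (S h) (T k)) : C = hHK.map S T :=
  hHK.clm_ext fun h k ↦ by rw [hC, map_tmul]

lemma map_mul_map (S S' : H →L[𝕜] H) (T T' : K →L[𝕜] K) :
    hHK.map S T * hHK.map S' T' = hHK.map (S * S') (T * T') :=
  hHK.eq_map fun h k ↦ by simp

lemma map_flip (S : H →L[𝕜] H) (T : K →L[𝕜] K) : hHK.flip.map T S = hHK.map S T :=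
  hHK.eq_map fun h k ↦ hHK.flip.map_tmul T S k h

/-- The amplification `S ↦ S ⊗ 1`, as a homomorphism of algebras. -/
noncomputable def amplification : (H →L[𝕜] H) →ₐ[𝕜] (HK →L[𝕜] HK) where
  toFun S := hHK.map S 1
  map_one' := (hHK.eq_map fun h k ↦ by simp).symm
  map_mul' S S' := by rw [map_mul_map, one_mul]
  map_zero' := (hHK.eq_map fun h k ↦ by simp).symm
  map_add' S S' := (hHK.eq_map fun h k ↦ by simp).symm
  commutes' c := (hHK.eq_map fun h k ↦ by simp [Algebra.algebraMap_eq_smul_one]).symm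

lemma spectrum_map_one_subset (S : H →L[𝕜] H) : spectrum 𝕜 (hHK.map S 1) ⊆ spectrum 𝕜 S :=
  AlgHom.spectrum_apply_subset hHK.amplification S

lemma mul_mem_approximatePointSpectrum_map {S : H →L[𝕜] H} {T : K →L[𝕜] K} {a b : 𝕜}
    (ha : a ∈ approximatePointSpectrum S) (hb : b ∈ approximatePointSpectrum T) :
    a * b ∈ approximatePointSpectrum (hHK.map S T) := by
  intro ε hε
  set δ := ε / (‖T‖ + ‖a‖ + 1)
  have hδ : 0 < δ := by positivity
  obtain ⟨h, hh, hSh⟩ := ha δ hδ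
  obtain ⟨k, hk, hTk⟩ := hb δ hδ
  refine ⟨tmul h k, by simp [hHK.norm_tmul, hh, hk], ?_⟩
  have hTk_le : ‖T k‖ ≤ ‖T‖ := by simpa [hk] using T.le_opNorm k
  calc ‖hHK.map S T (tmul h k) - (a * b) • tmul h k‖
    _ = ‖tmul (S h - a • h) (T k) + a • tmul h (T k - b • k)‖ := by
      congr 1
      simp only [map_tmul, map_sub, map_smul, LinearMap.sub_apply, LinearMap.smul_apply]
      module
    _ ≤ ‖S h - a • h‖ * ‖T k‖ + ‖a‖ * ‖T k - b • k‖ := by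
      refine (norm_add_le _ _).trans_eq ?_
      rw [norm_smul, hHK.norm_tmul, hHK.norm_tmul, hh, one_mul]
    _ ≤ δ * ‖T‖ + ‖a‖ * δ := by gcongr
    _ < δ * (‖T‖ + ‖a‖ + 1) := by linarith
    _ = ε := div_mul_cancel₀ ε (by positivity)

variable [CompleteSpace H] [CompleteSpace K]

lemma adjoint_map (S : H →L[𝕜] H) (T : K →L[𝕜] K) :
    adjoint (hHK.map S T) = hHK.map (adjoint S) (adjoint T) :=
  hHK.eq_map fun h k ↦ hHK.ext_inner fun h' k' ↦ by
    simp [ContinuousLinearMap.adjoint_inner_left, hHK.inner_tmul]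

lemma mul_mem_spectrum_map_of_conj_mem {S : H →L[𝕜] H} {T : K →L[𝕜] K} {a b : 𝕜}
    (ha : conj a ∈ approximatePointSpectrum (adjoint S))
    (hb : conj b ∈ approximatePointSpectrum (adjoint T)) :
    a * b ∈ spectrum 𝕜 (hHK.map S T) := by
  rw [← conj_mem_spectrum_adjoint_iff, adjoint_map, map_mul]
  exact approximatePointSpectrum_subset_spectrum (hHK.mul_mem_approximatePointSpectrum_map ha hb)

lemma mul_mem_spectrum_map_of_mem_frontier {S : H →L[𝕜] H} {T : K →L[𝕜] K} {a b : 𝕜}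
    (ha : a ∈ frontier (spectrum 𝕜 S)) (hb : b ∈ spectrum 𝕜 T) :
    a * b ∈ spectrum 𝕜 (hHK.map S T) := by
  rcases mem_approximatePointSpectrum_or_conj_mem hb with hb | hb
  · exact approximatePointSpectrum_subset_spectrum (hHK.mul_mem_approximatePointSpectrum_map
      (frontier_spectrum_subset_approximatePointSpectrum ha) hb)
  · exact hHK.mul_mem_spectrum_map_of_conj_mem
      (conj_mem_approximatePointSpectrum_adjoint_of_mem_frontier ha) hb

lemma spectrum_mul_spectrum_subset (S : H →L[𝕜] H) (T : K →L[𝕜] K) :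
    spectrum 𝕜 S * spectrum 𝕜 T ⊆ spectrum 𝕜 (hHK.map S T) := by
  rw [Set.mul_subset_iff]
  intro a ha b hb
  obtain ⟨a', ha', b', hb', hab, ha'_frontier | hb'_frontier⟩ :=
    exists_mem_frontier_mul_eq (spectrum.isCompact S) (spectrum.isCompact T) ha hb
  · exact hab ▸ hHK.mul_mem_spectrum_map_of_mem_frontier ha'_frontier hb'
  · rw [← hab, mul_comm, ← map_flip]
    exact hHK.flip.mul_mem_spectrum_map_of_mem_frontier hb'_frontier ha'

end Map

theorem spectrum_map {H K HK : Type*}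
    [NormedAddCommGroup H] [InnerProductSpace ℂ H] [CompleteSpace H]
    [NormedAddCommGroup K] [InnerProductSpace ℂ K] [CompleteSpace K]
    [NormedAddCommGroup HK] [InnerProductSpace ℂ HK] [CompleteSpace HK]
    {tmul : H →ₗ[ℂ] K →ₗ[ℂ] HK} (hHK : IsHilbertTensorProduct tmul)
    (S : H →L[ℂ] H) (T : K →L[ℂ] K) :
    spectrum ℂ (hHK.map S T) = spectrum ℂ S * spectrum ℂ T := by
  refine Set.Subset.antisymm ?_ (hHK.spectrum_mul_spectrum_subset S T)
  have hcomm : Commute (hHK.map S 1) (hHK.map 1 T) := by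
    simp only [Commute, SemiconjBy, map_mul_map, one_mul, mul_one]
  calc spectrum ℂ (hHK.map S T)
    _ = spectrum ℂ (hHK.map S 1 * hHK.map 1 T) := by rw [map_mul_map, mul_one, one_mul]
    _ ⊆ spectrum ℂ (hHK.map S 1) * spectrum ℂ (hHK.map 1 T) := spectrum_mul_subset_of_commute hcomm
    _ ⊆ spectrum ℂ S * spectrum ℂ T := Set.mul_subset_mul (hHK.spectrum_map_one_subset S)
      (hHK.map_flip 1 T ▸ hHK.flip.spectrum_map_one_subset T)

end IsHilbertTensorProduct

theorem spectrum_tensor_sum_add_prod_general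
    {H K HK : Type*}
    [NormedAddCommGroup H] [InnerProductSpace ℂ H] [CompleteSpace H]
    [NormedAddCommGroup K] [InnerProductSpace ℂ K] [CompleteSpace K]
    [NormedAddCommGroup HK] [InnerProductSpace ℂ HK] [CompleteSpace HK]
    {tmul : H →ₗ[ℂ] K →ₗ[ℂ] HK} (hHK : IsHilbertTensorProduct tmul)
    (A : H →L[ℂ] H) (B : K →L[ℂ] K) (C : HK →L[ℂ] HK)
    (hC : ∀ (h : H) (k : K), C (tmul h k) = tmul (A h) k + tmul h (B k) + tmul (A h) (B k)) :
    spectrum ℂ C =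
      {z : ℂ | ∃ x ∈ spectrum ℂ A, ∃ y ∈ spectrum ℂ B, z = x + y + x * y} := by
  have hC_add_one : algebraMap ℂ _ 1 + C =
      hHK.map (algebraMap ℂ _ 1 + A) (algebraMap ℂ _ 1 + B) := hHK.eq_map fun h k ↦ by
    simp only [map_one, add_apply, one_apply_eq_self, map_add, LinearMap.add_apply, hC]
    abel
  ext z
  rw [← spectrum.add_mem_add_iff (s := 1), hC_add_one, hHK.spectrum_map,
    ← spectrum.singleton_add_eq, ← spectrum.singleton_add_eq]
  simp only [Set.mem_mul, Set.singleton_add, Set.exists_mem_image, Set.mem_ofPred_eq]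
  refine exists_congr fun x ↦ and_congr_right fun _ ↦
    exists_congr fun y ↦ and_congr_right fun _ ↦ ?_
  constructor <;> intro h <;> linear_combination -h

/-- The spectrum of `A ⊗ id + id ⊗ B + A ⊗ B` on the Hilbert tensor product `H ⊗ K`
(presented as a Hilbert space `HK` with an elementary-tensor map `tmul` having
dense span and the product inner product) is the sum set of the spectra. -/
theorem spectrum_tensor_sum_add_prod
    {H K HK : Type*}
    [NormedAddCommGroup H] [InnerProductSpace ℂ H] [CompleteSpace H] [Nontrivial H]
    [NormedAddCommGroup K] [InnerProductSpace ℂ K] [CompleteSpace K] [Nontrivial K]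
    [NormedAddCommGroup HK] [InnerProductSpace ℂ HK] [CompleteSpace HK]
    (tmul : H →ₗ[ℂ] K →ₗ[ℂ] HK)
    (hinner : ∀ (h h' : H) (k k' : K),
      ⟪tmul h k, tmul h' k'⟫_ℂ = ⟪h, h'⟫_ℂ * ⟪k, k'⟫_ℂ)
    (hdense : Dense (Submodule.span ℂ {z : HK | ∃ h k, z = tmul h k} : Set HK))
    (A : H →L[ℂ] H) (hA : IsSelfAdjoint A)
    (B : K →L[ℂ] K) (hB : IsSelfAdjoint B)
    (C : HK →L[ℂ] HK)
    (hC : ∀ (h : H) (k : K), C (tmul h k) = tmul (A h) k + tmul h (B k) + tmul (A h) (B k)) :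
    spectrum ℂ C =
      {z : ℂ | ∃ x ∈ spectrum ℂ A, ∃ y ∈ spectrum ℂ B, z = x + y + x * y} :=
  spectrum_tensor_sum_add_prod_general ⟨hinner, hdense⟩ A B C hC
end

section
/- The spectrum of the adjacency operator of the graph sum of two bounded-degree graphs G and H equals {x + y : x ∈ σ(A_G), y ∈ σ(A_H)}, where A_G, A_H are their adjacency operators. -/
/-!
`ℓ²(V × W)` is the Hilbert tensor product of `ℓ²(V)` and `ℓ²(W)`, and there the adjacency operator
of the graph sum is `A ⊗ 1 + 1 ⊗ B`. The two summands commute and their spectra lie in those of `A`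
and `B`. In a commutative Banach algebra the spectrum consists of the values of characters, so the
spectrum of a sum of commuting elements lies in the sum of their spectra. Conversely `A` and `B` are
self-adjoint, so each point of their spectra is an approximate eigenvalue, and approximate
eigenvectors `x` for `a` and `y` for `b` make `x ⊗ y` one for `a + b`.
-/

open Pointwise TensorProduct

section CommutingSum

theorem spectrum_coe_centralizer {𝕜 R : Type*} [CommRing 𝕜] [Ring R] [Algebra 𝕜 R] {s : Set R}
    (a : Subalgebra.centralizer 𝕜 s) : spectrum 𝕜 (a : R) = spectrum 𝕜 a := by
  refine (spectrum.subset_subalgebra a).antisymm fun z hz hunit => hz ?_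
  obtain ⟨u, hu⟩ := hunit
  have hmem : (u : R) ∈ Subalgebra.centralizer 𝕜 s :=
    hu ▸ (algebraMap 𝕜 (Subalgebra.centralizer 𝕜 s) z - a).2
  have hinv : (↑u⁻¹ : R) ∈ Subalgebra.centralizer 𝕜 s := fun r hr =>
    Commute.units_inv_right (hmem r hr)
  exact ⟨⟨⟨u, hmem⟩, ⟨↑u⁻¹, hinv⟩, Subtype.ext u.mul_inv, Subtype.ext u.inv_mul⟩, Subtype.ext hu⟩

theorem centralizer_centralizer_pair_comm {M : Type*} [Mul M] {a b : M} (hab : Commute a b) :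
    ∀ x ∈ Set.centralizer (Set.centralizer {a, b}),
      ∀ y ∈ Set.centralizer (Set.centralizer {a, b}), x * y = y * x := by
  apply Set.centralizer_centralizer_comm_of_comm
  rintro x (rfl | rfl) y (rfl | rfl)
  exacts [rfl, hab, hab.symm, rfl]

-- The double centralizer of `{a, b}` is a commutative Banach algebra in which `a`, `b` and `a + b`
-- have the same spectra as in `R`.
theorem spectrum_add_subset_of_commute {R : Type*} [NormedRing R] [NormedAlgebra ℂ R]
    [CompleteSpace R] {a b : R} (hab : Commute a b) :
    spectrum ℂ (a + b) ⊆ spectrum ℂ a + spectrum ℂ b := by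
  let S : Subalgebra ℂ R := Subalgebra.centralizer ℂ (Set.centralizer {a, b})
  let : NormedCommRing S :=
    { (inferInstance : NormedRing S) with
      mul_comm x y := Subtype.ext (centralizer_centralizer_pair_comm hab x x.2 y y.2) }
  have : CompleteSpace S := (Set.isClosed_centralizer _).completeSpace_coe
  have hsub : {a, b} ⊆ (S : Set R) := Set.subset_centralizer_centralizer
  let a' : S := ⟨a, hsub (Set.mem_insert a {b})⟩
  let b' : S := ⟨b, hsub (Set.mem_insert_of_mem a rfl)⟩
  intro z hz
  obtain ⟨φ, hφ⟩ := WeakDual.CharacterSpace.mem_spectrum_iff_exists.mp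
    (spectrum.subset_subalgebra (a' + b') hz)
  refine ⟨φ a', ?_, φ b', ?_, (map_add φ a' b').symm.trans hφ⟩
  · exact spectrum_coe_centralizer a' ▸ AlgHom.apply_mem_spectrum φ a'
  · exact spectrum_coe_centralizer b' ▸ AlgHom.apply_mem_spectrum φ b'

end CommutingSum

section ApproxEigenvalue

/-- `z` is an approximate eigenvalue of `T` if there are unit vectors which `T - z` sends
arbitrarily close to zero. -/
def IsApproxEigenvalue {𝕜 E : Type*} [NontriviallyNormedField 𝕜] [SeminormedAddCommGroup E]
    [NormedSpace 𝕜 E] (T : E →L[𝕜] E) (z : 𝕜) : Prop :=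
  ∀ ε > 0, ∃ x, ‖x‖ = 1 ∧ ‖T x - z • x‖ < ε

theorem IsApproxEigenvalue.mem_spectrum {𝕜 E : Type*} [NontriviallyNormedField 𝕜]
    [SeminormedAddCommGroup E] [NormedSpace 𝕜 E] {T : E →L[𝕜] E} {z : 𝕜}
    (h : IsApproxEigenvalue T z) : z ∈ spectrum 𝕜 T := by
  rintro ⟨u, hu⟩
  obtain ⟨x, hx, hlt⟩ := h (1 / (‖(↑u⁻¹ : E →L[𝕜] E)‖ + 1)) (by positivity)
  have hux : ‖(u : E →L[𝕜] E) x‖ = ‖T x - z • x‖ := by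
    rw [hu, ← norm_neg, sub_apply, neg_sub, ContinuousLinearMap.algebraMap_apply]
  have hone : 1 ≤ ‖(↑u⁻¹ : E →L[𝕜] E)‖ * ‖T x - z • x‖ := by
    calc 1 = ‖(↑u⁻¹ * ↑u : E →L[𝕜] E) x‖ := by rw [u.inv_mul, one_apply_eq_self, hx]
      _ ≤ ‖(↑u⁻¹ : E →L[𝕜] E)‖ * ‖T x - z • x‖ := hux ▸ (↑u⁻¹ : E →L[𝕜] E).le_opNorm _
  rw [lt_div_iff₀ (by positivity)] at hlt
  linarith [norm_nonneg (T x - z • x)]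

variable {𝕜 E : Type*} [RCLike 𝕜] [NormedAddCommGroup E] [InnerProductSpace 𝕜 E] [CompleteSpace E]
  {T : E →L[𝕜] E}

theorem isUnit_of_isStarNormal_of_antilipschitzWith (hT : IsStarNormal T) {K : NNReal}
    (hK : AntilipschitzWith K T) : IsUnit T := by
  rw [ContinuousLinearMap.isUnit_iff_bijective,
    ContinuousLinearMap.bijective_iff_dense_range_and_antilipschitz]
  refine ⟨?_, K, hK⟩
  rw [Submodule.topologicalClosure_eq_top_iff,
    ContinuousLinearMap.IsStarNormal.orthogonal_range hT]
  exact LinearMap.ker_eq_bot.mpr hK.injective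

theorem isStarNormal_algebraMap_sub (hT : IsStarNormal T) (z : 𝕜) :
    IsStarNormal (algebraMap 𝕜 (E →L[𝕜] E) z - T) := by
  have hz : IsStarNormal (algebraMap 𝕜 (E →L[𝕜] E) z) :=
    Algebra.algebraMap_eq_smul_one (A := E →L[𝕜] E) z ▸ inferInstance
  exact Commute.isStarNormal_sub (Algebra.commutes z _)

theorem isApproxEigenvalue_of_mem_spectrum (hT : IsStarNormal T) {z : 𝕜} (hz : z ∈ spectrum 𝕜 T) :
    IsApproxEigenvalue T z := by
  by_contra hnot
  obtain ⟨ε, hε, hbound⟩ : ∃ ε > 0, ∀ x, ‖x‖ = 1 → ε ≤ ‖T x - z • x‖ := by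
    simpa only [IsApproxEigenvalue, not_forall, not_exists, not_and, not_lt, exists_prop]
      using hnot
  lift ε to NNReal using hε.le
  have hanti : AntilipschitzWith ε⁻¹ (algebraMap 𝕜 (E →L[𝕜] E) z - T) := by
    refine antilipschitz_of_bound_of_norm_one _ fun x hx => ?_
    rw [NNReal.coe_inv, inv_mul_eq_div, one_le_div hε, sub_apply,
      ContinuousLinearMap.algebraMap_apply, norm_sub_rev]
    exact hbound x hx
  exact hz (isUnit_of_isStarNormal_of_antilipschitzWith (isStarNormal_algebraMap_sub hT z) hanti)

end ApproxEigenvalue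

section DenseExtension

theorem continuousLinearMap_ext_of_denseRange {α 𝕜 E F : Type*} [Semiring 𝕜]
    [TopologicalSpace E] [AddCommMonoid E] [Module 𝕜 E]
    [TopologicalSpace F] [T2Space F] [AddCommMonoid F] [Module 𝕜 F]
    {j : α → E} (hj : DenseRange j) {S T : E →L[𝕜] F} (h : ∀ x, S (j x) = T (j x)) : S = T :=
  DFunLike.coe_injective (hj.equalizer S.continuous T.continuous (funext h))

variable {𝕜 D K : Type*} [NontriviallyNormedField 𝕜] [NormedAddCommGroup D] [NormedSpace 𝕜 D]
  [NormedAddCommGroup K] [NormedSpace 𝕜 K] [CompleteSpace K] {j : D →ₗᵢ[𝕜] K}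

theorem extend_comp_apply (hj : DenseRange j) (T : D →L[𝕜] D) (x : D) :
    (j.toContinuousLinearMap ∘L T).extend j.toContinuousLinearMap (j x) = j (T x) :=
  ContinuousLinearMap.extend_eq _ hj j.isometry.isUniformInducing x

/-- The algebra homomorphism extending bounded operators on `D` to the Banach space `K` in which `D`
sits densely and isometrically via `j`. -/
noncomputable def denseExtension (hj : DenseRange j) : (D →L[𝕜] D) →ₐ[𝕜] (K →L[𝕜] K) :=
  AlgHom.ofLinearMap
    { toFun T := (j.toContinuousLinearMap ∘L T).extend j.toContinuousLinearMap
      map_add' S T := continuousLinearMap_ext_of_denseRange hj fun x => by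
        simp only [extend_comp_apply hj, add_apply, map_add]
      map_smul' c T := continuousLinearMap_ext_of_denseRange hj fun x => by
        simp only [extend_comp_apply hj, smul_apply, map_smul, RingHom.id_apply] }
    (continuousLinearMap_ext_of_denseRange hj fun x => by
      simp only [LinearMap.coe_mk, AddHom.coe_mk, extend_comp_apply hj, one_apply_eq_self])
    (fun S T => continuousLinearMap_ext_of_denseRange hj fun x => by
      simp only [LinearMap.coe_mk, AddHom.coe_mk, extend_comp_apply hj, mul_apply_eq_comp])

theorem denseExtension_apply (hj : DenseRange j) (T : D →L[𝕜] D) (x : D) :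
    denseExtension hj T (j x) = j (T x) :=
  extend_comp_apply hj T x

end DenseExtension

section TensorSum

variable {𝕜 E F K : Type*} [RCLike 𝕜] [NormedAddCommGroup E] [InnerProductSpace 𝕜 E]
  [NormedAddCommGroup F] [InnerProductSpace 𝕜 F] [NormedAddCommGroup K] [InnerProductSpace 𝕜 K]

variable (𝕜 E F) in
/-- The ampliation `A ↦ A ⊗ 1` of bounded operators as an algebra homomorphism. -/
noncomputable def rTensorAlgHom : (E →L[𝕜] E) →ₐ[𝕜] (E ⊗[𝕜] F →L[𝕜] E ⊗[𝕜] F) :=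
  AlgHom.ofLinearMap
    { toFun A := A.rTensor F
      map_add' := ContinuousLinearMap.rTensor_add F
      map_smul' := ContinuousLinearMap.rTensor_smul F }
    (ContinuousLinearMap.rTensor_one F) (ContinuousLinearMap.rTensor_mul F)

variable (𝕜 E F) in
/-- The ampliation `B ↦ 1 ⊗ B` of bounded operators as an algebra homomorphism. -/
noncomputable def lTensorAlgHom : (F →L[𝕜] F) →ₐ[𝕜] (E ⊗[𝕜] F →L[𝕜] E ⊗[𝕜] F) :=
  AlgHom.ofLinearMap
    { toFun B := B.lTensor E
      map_add' := ContinuousLinearMap.lTensor_add E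
      map_smul' := ContinuousLinearMap.lTensor_smul E }
    (ContinuousLinearMap.lTensor_one E) (ContinuousLinearMap.lTensor_mul E)

theorem commute_rTensorAlgHom_lTensorAlgHom (A : E →L[𝕜] E) (B : F →L[𝕜] F) :
    Commute (rTensorAlgHom 𝕜 E F A) (lTensorAlgHom 𝕜 E F B) :=
  (ContinuousLinearMap.rTensor_comp_lTensor A B).trans
    (ContinuousLinearMap.lTensor_comp_rTensor B A).symm

/-- `C` acts as `A ⊗ 1 + 1 ⊗ B` on the image of the algebraic tensor product under `j`. When `j` has
dense range, `K` is the Hilbert tensor product of `E` and `F`, and `C` is the tensor sum of `A` and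
`B`. -/
def IsTensorSum (j : E ⊗[𝕜] F →ₗᵢ[𝕜] K) (A : E →L[𝕜] E) (B : F →L[𝕜] F) (C : K →L[𝕜] K) : Prop :=
  ∀ x y, C (j (x ⊗ₜ y)) = j (A x ⊗ₜ y + x ⊗ₜ B y)

namespace IsTensorSum

variable {j : E ⊗[𝕜] F →ₗᵢ[𝕜] K} {A : E →L[𝕜] E} {B : F →L[𝕜] F} {C : K →L[𝕜] K}

theorem eq_denseExtension_add [CompleteSpace K] (hC : IsTensorSum j A B C) (hj : DenseRange j) :
    C = denseExtension hj (rTensorAlgHom 𝕜 E F A) + denseExtension hj (lTensorAlgHom 𝕜 E F B) := by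
  rw [← map_add]
  refine continuousLinearMap_ext_of_denseRange hj fun ζ => ?_
  rw [denseExtension_apply]
  induction ζ with
  | zero => simp only [map_zero]
  | tmul x y => exact hC x y
  | add ζ ζ' h h' => simp only [map_add, h, h']

theorem norm_apply_tmul_sub_le (hC : IsTensorSum j A B C) (a b : 𝕜) (x : E) (y : F) :
    ‖C (j (x ⊗ₜ y)) - (a + b) • j (x ⊗ₜ y)‖ ≤ ‖A x - a • x‖ * ‖y‖ + ‖x‖ * ‖B y - b • y‖ := by
  have hsplit : C (j (x ⊗ₜ y)) - (a + b) • j (x ⊗ₜ y) =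
      j ((A x - a • x) ⊗ₜ y + x ⊗ₜ (B y - b • y)) := by
    rw [hC, ← map_smul, ← map_sub, TensorProduct.sub_tmul, TensorProduct.tmul_sub,
      TensorProduct.tmul_smul, ← TensorProduct.smul_tmul', add_smul, add_sub_add_comm]
  rw [hsplit, j.norm_map, ← TensorProduct.norm_tmul (𝕜 := 𝕜), ← TensorProduct.norm_tmul (𝕜 := 𝕜)]
  exact norm_add_le _ _

theorem isApproxEigenvalue_add (hC : IsTensorSum j A B C) {a b : 𝕜}
    (ha : IsApproxEigenvalue A a) (hb : IsApproxEigenvalue B b) :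
    IsApproxEigenvalue C (a + b) := by
  intro ε hε
  obtain ⟨x, hx, hxA⟩ := ha (ε / 2) (half_pos hε)
  obtain ⟨y, hy, hyB⟩ := hb (ε / 2) (half_pos hε)
  refine ⟨j (x ⊗ₜ y), by rw [j.norm_map, TensorProduct.norm_tmul, hx, hy, mul_one], ?_⟩
  calc ‖C (j (x ⊗ₜ y)) - (a + b) • j (x ⊗ₜ y)‖
      ≤ ‖A x - a • x‖ * ‖y‖ + ‖x‖ * ‖B y - b • y‖ := hC.norm_apply_tmul_sub_le a b x y
    _ = ‖A x - a • x‖ + ‖B y - b • y‖ := by rw [hx, hy, mul_one, one_mul]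
    _ < ε := by linarith

end IsTensorSum

end TensorSum

section TensorSumSpectrum

variable {E F K : Type*} [NormedAddCommGroup E] [InnerProductSpace ℂ E] [NormedAddCommGroup F]
  [InnerProductSpace ℂ F] [NormedAddCommGroup K] [InnerProductSpace ℂ K] [CompleteSpace K]
  {j : E ⊗[ℂ] F →ₗᵢ[ℂ] K} {A : E →L[ℂ] E} {B : F →L[ℂ] F} {C : K →L[ℂ] K}

theorem IsTensorSum.spectrum_subset (hC : IsTensorSum j A B C) (hj : DenseRange j) :
    spectrum ℂ C ⊆ spectrum ℂ A + spectrum ℂ B := by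
  let Φ := denseExtension hj
  rw [hC.eq_denseExtension_add hj]
  exact (spectrum_add_subset_of_commute <|
      (commute_rTensorAlgHom_lTensorAlgHom A B).map Φ).trans <|
    Set.add_subset_add (AlgHom.spectrum_apply_subset (Φ.comp (rTensorAlgHom ℂ E F)) A)
      (AlgHom.spectrum_apply_subset (Φ.comp (lTensorAlgHom ℂ E F)) B)

theorem IsTensorSum.spectrum_eq [CompleteSpace E] [CompleteSpace F] (hC : IsTensorSum j A B C)
    (hj : DenseRange j) (hA : IsStarNormal A) (hB : IsStarNormal B) :
    spectrum ℂ C = spectrum ℂ A + spectrum ℂ B := by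
  refine (hC.spectrum_subset hj).antisymm ?_
  rintro _ ⟨a, ha, b, hb, rfl⟩
  exact (hC.isApproxEigenvalue_add (isApproxEigenvalue_of_mem_spectrum hA ha)
    (isApproxEigenvalue_of_mem_spectrum hB hb)).mem_spectrum

end TensorSumSpectrum

section L2Tensor

variable {𝕜 V W : Type*} [RCLike 𝕜]

theorem memℓp_two_mul_prod (ξ : lp (fun _ : V => 𝕜) 2) (η : lp (fun _ : W => 𝕜) 2) :
    Memℓp (fun p : V × W => ξ p.1 * η p.2) 2 := by
  have hξ : Summable fun v => ‖ξ v‖ ^ (2 : ENNReal).toReal := (lp.memℓp ξ).summable (by simp)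
  have hη : Summable fun w => ‖η w‖ ^ (2 : ENNReal).toReal := (lp.memℓp η).summable (by simp)
  refine memℓp_gen ?_
  simpa only [norm_mul, Real.mul_rpow (norm_nonneg _) (norm_nonneg _)] using
    hξ.mul_of_nonneg hη (fun _ => by positivity) fun _ => by positivity

/-- The linear map underlying `l2TensorIsometry`; it sends `ξ ⊗ η` to `(v, w) ↦ ξ v * η w`. -/
noncomputable def l2TensorLinearMap :
    lp (fun _ : V => 𝕜) 2 ⊗[𝕜] lp (fun _ : W => 𝕜) 2 →ₗ[𝕜] lp (fun _ : V × W => 𝕜) 2 :=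
  TensorProduct.lift <| LinearMap.mk₂ 𝕜 (fun ξ η => ⟨_, memℓp_two_mul_prod ξ η⟩)
    (fun _ _ _ => lp.ext <| funext fun _ => add_mul _ _ _)
    (fun _ _ _ => lp.ext <| funext fun _ => mul_assoc _ _ _)
    (fun _ _ _ => lp.ext <| funext fun _ => mul_add _ _ _)
    (fun _ _ _ => lp.ext <| funext fun _ => mul_left_comm _ _ _)

theorem l2TensorLinearMap_tmul_apply (ξ : lp (fun _ : V => 𝕜) 2) (η : lp (fun _ : W => 𝕜) 2)
    (p : V × W) : l2TensorLinearMap (ξ ⊗ₜ η) p = ξ p.1 * η p.2 :=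
  rfl

theorem inner_l2TensorLinearMap_tmul (ξ ξ' : lp (fun _ : V => 𝕜) 2)
    (η η' : lp (fun _ : W => 𝕜) 2) :
    inner 𝕜 (l2TensorLinearMap (ξ ⊗ₜ η)) (l2TensorLinearMap (ξ' ⊗ₜ η')) =
      inner 𝕜 ξ ξ' * inner 𝕜 η η' := by
  have hmul (p : V × W) : inner 𝕜 (ξ p.1) (ξ' p.1) * inner 𝕜 (η p.2) (η' p.2) =
      inner 𝕜 (l2TensorLinearMap (ξ ⊗ₜ η) p) (l2TensorLinearMap (ξ' ⊗ₜ η') p) := by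
    simp only [l2TensorLinearMap_tmul_apply, RCLike.inner_apply', map_mul]
    ring
  have hξ : HasSum (fun v => inner 𝕜 (ξ v) (ξ' v)) (inner 𝕜 ξ ξ') := lp.hasSum_inner ξ ξ'
  have hη : HasSum (fun w => inner 𝕜 (η w) (η' w)) (inner 𝕜 η η') := lp.hasSum_inner η η'
  have hξη : HasSum (fun p : V × W => inner 𝕜 (ξ p.1) (ξ' p.1) * inner 𝕜 (η p.2) (η' p.2))
      (inner 𝕜 (l2TensorLinearMap (ξ ⊗ₜ η)) (l2TensorLinearMap (ξ' ⊗ₜ η'))) :=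
    (lp.hasSum_inner (𝕜 := 𝕜) (l2TensorLinearMap (ξ ⊗ₜ η))
      (l2TensorLinearMap (ξ' ⊗ₜ η'))).congr_fun hmul
  exact (hξ.mul_eq hη hξη).symm

theorem inner_l2TensorLinearMap (ζ ζ' : lp (fun _ : V => 𝕜) 2 ⊗[𝕜] lp (fun _ : W => 𝕜) 2) :
    inner 𝕜 (l2TensorLinearMap ζ) (l2TensorLinearMap ζ') = inner 𝕜 ζ ζ' := by
  induction ζ with
  | zero => simp only [map_zero, inner_zero_left]
  | add ζ₁ ζ₂ h₁ h₂ => simp only [map_add, inner_add_left, h₁, h₂]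
  | tmul ξ η =>
    induction ζ' with
    | zero => simp only [map_zero, inner_zero_right]
    | add ζ₁ ζ₂ h₁ h₂ => simp only [map_add, inner_add_right, h₁, h₂]
    | tmul ξ' η' => rw [TensorProduct.inner_tmul, inner_l2TensorLinearMap_tmul]

/-- The isometric embedding exhibiting `ℓ²(V × W)` as the Hilbert tensor product of `ℓ²(V)` and
`ℓ²(W)`. -/
noncomputable def l2TensorIsometry :
    lp (fun _ : V => 𝕜) 2 ⊗[𝕜] lp (fun _ : W => 𝕜) 2 →ₗᵢ[𝕜] lp (fun _ : V × W => 𝕜) 2 :=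
  l2TensorLinearMap.isometryOfInner inner_l2TensorLinearMap

theorem l2TensorIsometry_tmul_apply (ξ : lp (fun _ : V => 𝕜) 2) (η : lp (fun _ : W => 𝕜) 2)
    (p : V × W) : l2TensorIsometry (ξ ⊗ₜ η) p = ξ p.1 * η p.2 :=
  rfl

theorem l2TensorIsometry_single_tmul_single [DecidableEq V] [DecidableEq W] (v : V) (w : W)
    (a b : 𝕜) :
    l2TensorIsometry (lp.single 2 v a ⊗ₜ lp.single 2 w b) = lp.single 2 (v, w) (a * b) := by
  ext p
  rw [l2TensorIsometry_tmul_apply]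
  simp only [lp.single_apply, Pi.single_apply, Prod.ext_iff]
  split_ifs <;> simp_all

theorem denseRange_l2TensorIsometry :
    DenseRange (l2TensorIsometry :
      lp (fun _ : V => 𝕜) 2 ⊗[𝕜] lp (fun _ : W => 𝕜) 2 →ₗᵢ[𝕜] lp (fun _ : V × W => 𝕜) 2) := by
  classical
  intro ζ
  refine mem_closure_of_tendsto (lp.hasSum_single (by simp) ζ) (.of_forall fun s => ?_)
  rw [← LinearIsometry.coe_toLinearMap, ← LinearMap.coe_range]
  refine sum_mem fun p _ => ⟨lp.single 2 p.1 (ζ p) ⊗ₜ lp.single 2 p.2 1, ?_⟩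
  exact (l2TensorIsometry_single_tmul_single ..).trans (by rw [mul_one])

end L2Tensor

section Adjacency

theorem isSelfAdjoint_of_apply_single {𝕜 ι : Type*} [RCLike 𝕜] [DecidableEq ι]
    {A : lp (fun _ : ι => 𝕜) 2 →L[𝕜] lp (fun _ : ι => 𝕜) 2}
    (hA : ∀ i j, starRingEnd 𝕜 (A (lp.single 2 j 1) i) = A (lp.single 2 i 1) j) :
    IsSelfAdjoint A := by
  refine lp.ext_continuousLinearMap (by simp) fun i => ContinuousLinearMap.ext_ring ?_
  ext j
  have hadj : inner 𝕜 (lp.single 2 j (1 : 𝕜)) (A.adjoint (lp.single 2 i 1)) =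
      inner 𝕜 (A (lp.single 2 j 1)) (lp.single 2 i (1 : 𝕜)) :=
    A.adjoint_inner_right _ _
  rw [lp.inner_single_left, lp.inner_single_right] at hadj
  simp only [RCLike.inner_apply, map_one, mul_one, hA, one_mul] at hadj
  exact hadj

variable {V W : Type*}

theorem tsum_neighborSet_boxProd {M : Type*} [AddCommMonoid M] [TopologicalSpace M] [T2Space M]
    [ContinuousAdd M] {G : SimpleGraph V} {H : SimpleGraph W} {v : V} {w : W}
    (hv : (G.neighborSet v).Finite) (hw : (H.neighborSet w).Finite) (f : V × W → M) :
    ∑' q : (G.boxProd H).neighborSet (v, w), f q =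
      ∑' u : G.neighborSet v, f (u, w) + ∑' u : H.neighborSet w, f (v, u) := by
  rw [SimpleGraph.neighborSet_boxProd, Set.prod_singleton, Set.singleton_prod]
  have hdisj : Disjoint ((·, w) '' G.neighborSet v) ((v, ·) '' H.neighborSet w) := by
    rw [Set.disjoint_left]
    rintro _ ⟨u, hu, rfl⟩ ⟨u', -, hu'⟩
    obtain rfl : v = u := congrArg Prod.fst hu'
    exact G.irrefl hu
  rw [Summable.tsum_union_disjoint hdisj ((hv.image _).summable f) ((hw.image _).summable f),
    tsum_image f (Prod.mk_left_injective w).injOn, tsum_image f (Prod.mk_right_injective v).injOn]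

/-- `A` is the adjacency operator of `G` on `ℓ²(V)`: it sums a function over the neighbors of each
vertex. -/
def IsAdjacencyOperator {𝕜 : Type*} [RCLike 𝕜] (G : SimpleGraph V)
    (A : lp (fun _ : V => 𝕜) 2 →L[𝕜] lp (fun _ : V => 𝕜) 2) : Prop :=
  ∀ ξ v, A ξ v = ∑' u : G.neighborSet v, ξ u

namespace IsAdjacencyOperator

variable {𝕜 : Type*} [RCLike 𝕜] {G : SimpleGraph V} {H : SimpleGraph W}
  {A : lp (fun _ : V => 𝕜) 2 →L[𝕜] lp (fun _ : V => 𝕜) 2}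
  {B : lp (fun _ : W => 𝕜) 2 →L[𝕜] lp (fun _ : W => 𝕜) 2}
  {C : lp (fun _ : V × W => 𝕜) 2 →L[𝕜] lp (fun _ : V × W => 𝕜) 2}

theorem apply_single [DecidableEq V] [DecidableRel G.Adj] (hA : IsAdjacencyOperator G A)
    (u v : V) : A (lp.single 2 u 1) v = if G.Adj v u then 1 else 0 := by
  rw [hA, tsum_subtype (G.neighborSet v), tsum_eq_single u]
  · simp [Set.indicator_apply]
  · intro x hx
    simp [hx]

theorem isSelfAdjoint (hA : IsAdjacencyOperator G A) : IsSelfAdjoint A := by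
  classical
  refine isSelfAdjoint_of_apply_single fun u v => ?_
  rw [hA.apply_single, hA.apply_single, apply_ite (starRingEnd 𝕜), map_one, map_zero]
  simp only [G.adj_comm u v]

theorem isTensorSum_boxProd (hA : IsAdjacencyOperator G A) (hB : IsAdjacencyOperator H B)
    (hC : IsAdjacencyOperator (G.boxProd H) C) (hG : ∀ v, (G.neighborSet v).Finite)
    (hH : ∀ w, (H.neighborSet w).Finite) : IsTensorSum l2TensorIsometry A B C := by
  intro ξ η
  ext ⟨v, w⟩
  rw [hC, tsum_neighborSet_boxProd (hG v) (hH w), map_add, lp.coeFn_add, Pi.add_apply]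
  simp only [l2TensorIsometry_tmul_apply, hA ξ, hB η, tsum_mul_left, tsum_mul_right]

end IsAdjacencyOperator

end Adjacency

/-- The spectrum of the adjacency operator of the graph sum (Cartesian product)
of two nonempty bounded-degree graphs is the sum set of the spectra of their
adjacency operators. -/
theorem spectrum_adjacency_boxProd
    {V W : Type*} [Nonempty V] [Nonempty W]
    (G : SimpleGraph V) (H : SimpleGraph W)
    (hGfin : ∀ v, (G.neighborSet v).Finite) (hGbdd : ∃ k, ∀ v, (G.neighborSet v).ncard ≤ k)
    (hHfin : ∀ w, (H.neighborSet w).Finite) (hHbdd : ∃ k, ∀ w, (H.neighborSet w).ncard ≤ k)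
    (A : lp (fun _ : V => ℂ) 2 →L[ℂ] lp (fun _ : V => ℂ) 2)
    (hA : ∀ (ξ : lp (fun _ : V => ℂ) 2) (v : V),
      A ξ v = ∑' u : G.neighborSet v, ξ (u : V))
    (B : lp (fun _ : W => ℂ) 2 →L[ℂ] lp (fun _ : W => ℂ) 2)
    (hB : ∀ (η : lp (fun _ : W => ℂ) 2) (w : W),
      B η w = ∑' u : H.neighborSet w, η (u : W))
    (C : lp (fun _ : V × W => ℂ) 2 →L[ℂ] lp (fun _ : V × W => ℂ) 2)
    (hC : ∀ (ζ : lp (fun _ : V × W => ℂ) 2) (p : V × W),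
      C ζ p = ∑' q : (G.boxProd H).neighborSet p, ζ (q : V × W)) :
    spectrum ℂ C = {z : ℂ | ∃ x ∈ spectrum ℂ A, ∃ y ∈ spectrum ℂ B, z = x + y} := by
  have hA' : IsAdjacencyOperator G A := hA
  have hB' : IsAdjacencyOperator H B := hB
  have hsum : IsTensorSum l2TensorIsometry A B C := hA'.isTensorSum_boxProd hB' hC hGfin hHfin
  rw [hsum.spectrum_eq denseRange_l2TensorIsometry hA'.isSelfAdjoint.isStarNormal
    hB'.isSelfAdjoint.isStarNormal]
  ext z
  simp only [Set.mem_add, Set.mem_ofPred_eq, eq_comm]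
end
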